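/- Let F : R^M → R^M be C^2, σ : R^M → R be C^3, fix x ∈ R^M and w ∈ R^M. Then, as t → 0⁺, the spatial gradient of the log Jacobian determinant of one Euler step satisfies ∇_x log det(I + t DF(x) + √t · w (∇σ(x))^T) = √t ∇²σ(x) w + t ( ∇(div F)(x) − ⟨∇σ(x), w⟩ ∇²σ(x) w ) + o(t) in R^M. -/

import Mathlib

open Matrix Filter Topology

/-- the gradient (column vector of partial derivatives) of a scalar function on `ℝ^M` -/
noncomputable def grad {M : ℕ} (φ : (Fin M → ℝ) → ℝ) (x : Fin M → ℝ) : Fin M → ℝ :=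
  fun j => fderiv ℝ φ x (Pi.single j 1)

/-- the Jacobian matrix of a map `ℝ^M → ℝ^M` -/
noncomputable def jac {M : ℕ} (F : (Fin M → ℝ) → (Fin M → ℝ)) (x : Fin M → ℝ) :
    Matrix (Fin M) (Fin M) ℝ :=
  Matrix.of fun i j => fderiv ℝ F x (Pi.single j 1) i

/-- Jacobi's formula for the derivative of `log det`. -/
theorem fderiv_log_det_aux {M : ℕ} (B : (Fin M → ℝ) → Matrix (Fin M) (Fin M) ℝ)
    (B' : Fin M → Fin M → ((Fin M → ℝ) →L[ℝ] ℝ)) (x e : Fin M → ℝ)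
    (hB : ∀ i k, HasFDerivAt (fun y => B y i k) (B' i k) x) (hd : (B x).det ≠ 0) :
    fderiv ℝ (fun y => Real.log (B y).det) x e
      = ((B x)⁻¹ * Matrix.of (fun i k => B' i k e)).trace := by
  let f : ContinuousMultilinearMap ℝ (fun _ : Fin M => Fin M → ℝ) ℝ :=
    { (Matrix.detRowAlternating (n := Fin M) (R := ℝ)).toMultilinearMap with
      cont := (continuous_id.matrix_det : Continuous fun A : Matrix (Fin M) (Fin M) ℝ => A.det) }
  have hf : ∀ A : Matrix (Fin M) (Fin M) ℝ, f A = A.det := fun A => rfl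
  have hrow : ∀ i, HasFDerivAt (fun y => B y i) (ContinuousLinearMap.pi (B' i)) x := by
    intro i
    rw [hasFDerivAt_pi']
    intro k
    exact hB i k
  have hdet := HasFDerivAt.multilinear_comp f hrow
  have hdet' : HasFDerivAt (fun y => (B y).det)
    (∑ i, (f.toContinuousLinearMap (fun j => B x j) i) ∘L (ContinuousLinearMap.pi (B' i))) x := hdet
  rw [(hdet'.log hd).fderiv]
  have key : ∀ X : Matrix (Fin M) (Fin M) ℝ,
      ∑ i, ((B x).updateRow i (X i)).det = ((B x).adjugate * X).trace := by
    intro X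
    rw [Matrix.trace_mul_comm, Matrix.trace]
    refine Finset.sum_congr rfl fun i _ => ?_
    rw [← Matrix.cramer_transpose_apply, Matrix.cramer_eq_adjugate_mulVec,
      ← Matrix.adjugate_transpose, Matrix.mulVec_transpose]
    rfl
  rw [Matrix.inv_def, Matrix.smul_mul, Matrix.trace_smul, ← key, Ring.inverse_eq_inv']
  simp only [ContinuousLinearMap.smul_apply, ContinuousLinearMap.sum_apply]
  rfl

/-- The algebraic expansion in `s = √t`. -/
theorem trace_inv_expansion_aux {M : ℕ} (J C P X : Matrix (Fin M) (Fin M) ℝ) :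
    (∀ᶠ s : ℝ in 𝓝 0, ((1 : Matrix (Fin M) (Fin M) ℝ) + s ^ 2 • J + s • C).det ≠ 0) ∧
    Tendsto (fun s : ℝ => (s ^ 2)⁻¹ *
      (((1 + s ^ 2 • J + s • C)⁻¹ * (s ^ 2 • P + s • X)).trace
        - (s * X.trace + s ^ 2 * (P.trace - (C * X).trace)))) (𝓝[>] 0) (𝓝 0) := by
  have hA : Continuous (fun s : ℝ => (1 : Matrix (Fin M) (Fin M) ℝ) + s ^ 2 • J + s • C) := by
    fun_prop
  have h1 : ∀ᶠ s : ℝ in 𝓝 0, ((1 : Matrix (Fin M) (Fin M) ℝ) + s ^ 2 • J + s • C).det ≠ 0 := by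
    refine (hA.matrix_det.continuousAt).eventually_ne ?_
    simp
  refine ⟨h1, ?_⟩
  have hinv : ContinuousAt
      (fun s : ℝ => ((1 : Matrix (Fin M) (Fin M) ℝ) + s ^ 2 • J + s • C)⁻¹) 0 := by
    refine ContinuousAt.comp (g := Inv.inv) (continuousAt_matrix_inv _ ?_) hA.continuousAt
    simp only [Ring.inverse_eq_inv']
    apply continuousAt_inv₀
    simp
  have hlim : ContinuousAt (fun s : ℝ => (C * X).trace -
      ((1 + s ^ 2 • J + s • C)⁻¹ * ((C + s • J) * (X + s • P))).trace) 0 := by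
    refine ContinuousAt.sub continuousAt_const ?_
    refine ContinuousAt.comp (g := Matrix.trace) (continuous_id.matrix_trace).continuousAt ?_
    refine hinv.mul ?_
    fun_prop
  have h0 := hlim.tendsto
  simp only [ne_eq, OfNat.ofNat_ne_zero, not_false_eq_true, zero_pow, zero_smul, add_zero,
    inv_one, one_mul, sub_self] at h0
  refine (h0.mono_left nhdsWithin_le_nhds).congr' ?_
  filter_upwards [nhdsWithin_le_nhds h1, self_mem_nhdsWithin] with s hs hpos
  have hs0 : s ≠ 0 := ne_of_gt hpos
  set A := (1 : Matrix (Fin M) (Fin M) ℝ) + s ^ 2 • J + s • C with hAdef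
  have hAA : A⁻¹ * A = 1 := Matrix.nonsing_inv_mul _ (isUnit_iff_ne_zero.mpr hs)
  have e1 : s ^ 2 • P + s • X = s • (X + s • P) := by
    rw [smul_add, smul_smul, pow_two, add_comm]
  have e2 : A⁻¹ * (X + s • P) = (X + s • P) - s • (A⁻¹ * ((C + s • J) * (X + s • P))) := by
    have : A = 1 + s • (C + s • J) := by
      rw [hAdef, smul_add, smul_smul, pow_two]; abel
    have h3 : A⁻¹ + s • (A⁻¹ * (C + s • J)) = 1 := by
      rw [← Matrix.mul_smul]
      calc A⁻¹ + A⁻¹ * (s • (C + s • J)) = A⁻¹ * (1 + s • (C + s • J)) := by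
            rw [Matrix.mul_add, Matrix.mul_one]
        _ = 1 := by rw [← this, hAA]
    rw [eq_sub_iff_add_eq, ← Matrix.mul_assoc, ← Matrix.smul_mul, ← Matrix.add_mul, h3,
      Matrix.one_mul]
  rw [e1, Matrix.mul_smul, e2]
  simp only [Matrix.trace_smul, Matrix.trace_sub, Matrix.trace_add, smul_eq_mul]
  field_simp
  ring

/-- the spatial gradient of the log Jacobian determinant of one Euler step:
`∇ₓ log det(I + t DF(x) + √t·w (∇σ(x))ᵀ)
  = √t ∇²σ(x) w + t (∇(div F)(x) − ⟨∇σ(x), w⟩ ∇²σ(x) w) + o(t)` as `t → 0⁺`. -/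
theorem grad_logdet_euler_step_expansion (M : ℕ)
    (F : (Fin M → ℝ) → (Fin M → ℝ)) (σ : (Fin M → ℝ) → ℝ)
    (hF : ContDiff ℝ 2 F) (hσ : ContDiff ℝ 3 σ) (x w : Fin M → ℝ) :
    Tendsto (fun t : ℝ =>
      ‖grad (fun y => Real.log (((1 : Matrix (Fin M) (Fin M) ℝ)
            + t • jac F y + Real.sqrt t • vecMulVec w (grad σ y)).det)) x
        - (Real.sqrt t • (jac (fun y => grad σ y) x *ᵥ w)
            + t • (grad (fun y => (jac F y).trace) x
                - (grad σ x ⬝ᵥ w) • (jac (fun y => grad σ y) x *ᵥ w)))‖ / t)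
      (nhdsWithin 0 (Set.Ioi 0)) (nhds 0) := by
  have hfF : ContDiff ℝ 1 (fderiv ℝ F) := hF.fderiv_right (by norm_num)
  have hfσ : ContDiff ℝ 2 (fderiv ℝ σ) := hσ.fderiv_right (by norm_num)
  have hfσ' : DifferentiableAt ℝ (fderiv ℝ σ) x := hfσ.differentiable (by norm_num) x
  have hJ : ∀ i k, DifferentiableAt ℝ (fun y => jac F y i k) x := by
    intro i k
    have h1 : DifferentiableAt ℝ (fun y => fderiv ℝ F y (Pi.single k 1)) x :=
      (hfF.differentiable (by norm_num) x).clm_apply (differentiableAt_const _)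
    exact (differentiableAt_pi.1 h1) i
  have hg : ∀ k, HasFDerivAt (fun y => grad σ y k)
      ((ContinuousLinearMap.apply ℝ ℝ (Pi.single k (1 : ℝ))).comp
        (fderiv ℝ (fderiv ℝ σ) x)) x := by
    intro k
    exact (ContinuousLinearMap.apply ℝ ℝ (Pi.single k (1 : ℝ))).hasFDerivAt.comp x
      hfσ'.hasFDerivAt
  have hgrad : HasFDerivAt (fun y => grad σ y) (ContinuousLinearMap.pi fun k =>
      ((ContinuousLinearMap.apply ℝ ℝ (Pi.single k (1 : ℝ))).comp
        (fderiv ℝ (fderiv ℝ σ) x))) x := by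
    rw [hasFDerivAt_pi']
    intro k
    exact hg k
  have hsymm : IsSymmSndFDerivAt ℝ σ x :=
    hσ.contDiffAt.isSymmSndFDerivAt (by simp; norm_num)
  suffices h : Tendsto (fun t : ℝ => t⁻¹ • (grad (fun y => Real.log (((1 : Matrix (Fin M) (Fin M) ℝ)
            + t • jac F y + Real.sqrt t • vecMulVec w (grad σ y)).det)) x
        - (Real.sqrt t • (jac (fun y => grad σ y) x *ᵥ w)
            + t • (grad (fun y => (jac F y).trace) x
                - (grad σ x ⬝ᵥ w) • (jac (fun y => grad σ y) x *ᵥ w)))))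
      (nhdsWithin 0 (Set.Ioi 0)) (nhds 0) by
    refine (tendsto_zero_iff_norm_tendsto_zero.1 h).congr' ?_
    filter_upwards [self_mem_nhdsWithin] with t ht
    rw [norm_smul, norm_inv, Real.norm_of_nonneg (le_of_lt ht), div_eq_inv_mul]
  rw [tendsto_pi_nhds]
  intro j
  set P : Matrix (Fin M) (Fin M) ℝ :=
    Matrix.of fun i k => fderiv ℝ (fun y => jac F y i k) x (Pi.single j 1) with hP
  set q : Fin M → ℝ := fun k => fderiv ℝ (fderiv ℝ σ) x (Pi.single j 1) (Pi.single k 1) with hq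
  obtain ⟨hdet, hexp⟩ := trace_inv_expansion_aux (jac F x) (vecMulVec w (grad σ x)) P
    (vecMulVec w q)
  have hsq : Tendsto Real.sqrt (𝓝[>] 0) (𝓝[>] 0) := by
    refine tendsto_nhdsWithin_iff.2 ⟨?_, ?_⟩
    · have := Real.continuous_sqrt.tendsto 0
      rw [Real.sqrt_zero] at this
      exact this.mono_left nhdsWithin_le_nhds
    · filter_upwards [self_mem_nhdsWithin] with t ht
      exact Real.sqrt_pos.2 ht
  have hHw : (jac (fun y => grad σ y) x *ᵥ w) j = (vecMulVec w q).trace := by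
    simp only [Matrix.mulVec, dotProduct, Matrix.trace, Matrix.diag, vecMulVec_apply, jac,
      Matrix.of_apply, hgrad.fderiv, hq]
    refine Finset.sum_congr rfl fun k _ => ?_
    rw [mul_comm]
    congr 1
    exact hsymm _ _
  have htr : grad (fun y => (jac F y).trace) x j = P.trace := by
    simp only [grad, Matrix.trace, Matrix.diag, hP, Matrix.of_apply]
    rw [fderiv_fun_sum (fun i _ => hJ i i)]
    simp
  have hCX : (vecMulVec w (grad σ x) * vecMulVec w q).trace
      = (grad σ x ⬝ᵥ w) * (vecMulVec w q).trace := by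
    rw [Matrix.vecMulVec_mul_vecMulVec, Matrix.vecMulVec_smul, Matrix.trace_smul, smul_eq_mul]
  refine (hexp.comp hsq).congr' ?_
  filter_upwards [self_mem_nhdsWithin, hsq (nhdsWithin_le_nhds hdet)] with t ht hdt
  have hst : Real.sqrt t ^ 2 = t := Real.sq_sqrt (le_of_lt ht)
  simp only [Set.mem_preimage, Set.mem_setOf_eq, hst] at hdt
  have hmain := fderiv_log_det_aux (fun y => (1 : Matrix (Fin M) (Fin M) ℝ)
            + t • jac F y + Real.sqrt t • vecMulVec w (grad σ y))
    (fun i k => t • fderiv ℝ (fun y => jac F y i k) x + Real.sqrt t • (w i •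
      ((ContinuousLinearMap.apply ℝ ℝ (Pi.single k (1 : ℝ))).comp
        (fderiv ℝ (fderiv ℝ σ) x)))) x (Pi.single j 1) (by
      intro i k
      have h1 := ((hJ i k).hasFDerivAt.const_smul t).const_add
        ((1 : Matrix (Fin M) (Fin M) ℝ) i k)
      have h2 := ((hg k).const_smul (w i)).const_smul (Real.sqrt t)
      exact h1.add h2) hdt
  have hX : (Matrix.of fun i k => (t • fderiv ℝ (fun y => jac F y i k) x + Real.sqrt t • (w i •
      ((ContinuousLinearMap.apply ℝ ℝ (Pi.single k (1 : ℝ))).comp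
        (fderiv ℝ (fderiv ℝ σ) x)))) (Pi.single j 1)) = t • P + Real.sqrt t • vecMulVec w q := by
    ext i k
    simp [hP, hq, vecMulVec_apply]
  rw [hX] at hmain
  simp only [Function.comp_apply, hst, Pi.smul_apply, Pi.sub_apply, Pi.add_apply, smul_eq_mul,
    hHw, htr, hCX]
  rw [← hmain]
  rfl
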